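/- arXiv:2105.05422 — 3 statements merged into one kernel-verified Lean document; each statement's English description precedes it below -/
import Mathlib

section
/- In the category of small categories and lenses, all idempotents split: if (f, φ) : A ⇌ A is a lens whose composite with itself equals itself as a lens, then there exist a small category E and lenses (r, ρ) : A ⇌ E and (s, σ) : E ⇌ A such that the composite of (r, ρ) followed by (s, σ) equals (f, φ) and the composite of (s, σ) followed by (r, ρ) equals the identity lens on E. -/
open CategoryTheory

universe u

/-- A functor `F` is a discrete opfibration if for every object `a` of its domain and
every morphism `u : F.obj a ⟶ b` of its codomain, there exists a unique morphism `w`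
with domain `a` such that `F.map w = u` (up to the identification of codomains). -/
def IsDiscreteOpfibration {A B : Type u} [SmallCategory A] [SmallCategory B]
    (F : A ⥤ B) : Prop :=
  ∀ ⦃a : A⦄ ⦃b : B⦄ (u : F.obj a ⟶ b),
    ∃! w : Σ a' : A, a ⟶ a', ∃ h : F.obj w.1 = b, F.map w.2 = u ≫ eqToHom h.symm

/-- A (delta) lens between small categories: a functor together with a lifting
operation satisfying the three lens axioms. `lift u` packages the codomain
`a'` of the chosen lift together with the lift `a ⟶ a'` itself. -/
structure Lens (A B : Type u) [SmallCategory A] [SmallCategory B] where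
  /-- the underlying (Get) functor -/
  func : A ⥤ B
  /-- the lifting (Put) operation -/
  lift : ∀ ⦃a : A⦄ ⦃b : B⦄, (func.obj a ⟶ b) → Σ a' : A, a ⟶ a'
  /-- the codomain of the lift lies over the codomain of the lifted morphism -/
  lift_cod : ∀ ⦃a : A⦄ ⦃b : B⦄ (u : func.obj a ⟶ b), func.obj (lift u).1 = b
  /-- axiom (1): `f (φ (a, u)) = u` -/
  lift_map : ∀ ⦃a : A⦄ ⦃b : B⦄ (u : func.obj a ⟶ b),
      func.map (lift u).2 = u ≫ eqToHom (lift_cod u).symm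
  /-- axiom (2): `φ (a, 1) = 1` -/
  lift_id : ∀ a : A, lift (𝟙 (func.obj a)) = ⟨a, 𝟙 a⟩
  /-- axiom (3): `φ (a, v ∘ u) = φ (a', v) ∘ φ (a, u)` -/
  lift_comp : ∀ ⦃a : A⦄ ⦃b c : B⦄ (u : func.obj a ⟶ b) (v : b ⟶ c),
      lift (u ≫ v) = ⟨(lift (eqToHom (lift_cod u) ≫ v)).1,
        (lift u).2 ≫ (lift (eqToHom (lift_cod u) ≫ v)).2⟩

namespace Lens

variable {A B C : Type u} [SmallCategory A] [SmallCategory B] [SmallCategory C]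

theorem lift_eqToHom (L : Lens A B) {a a' : A} (h : a' = a) {b : B}
    (u : L.func.obj a ⟶ b) (h' : L.func.obj a' = L.func.obj a) :
    L.lift (eqToHom h' ≫ u) = ⟨(L.lift u).1, eqToHom h ≫ (L.lift u).2⟩ := by
  subst h; simp

/-- The identity lens on a small category. -/
def id (A : Type u) [SmallCategory A] : Lens A A where
  func := Functor.id A
  lift _ b u := ⟨b, u⟩
  lift_cod _ _ _ := rfl
  lift_map := by intros; simp
  lift_id := by intros; rfl
  lift_comp := by intros; simp

/-- Composition of lenses: `(L.comp M).lift u = L.lift ((M.lift u).2)`. -/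
def comp (L : Lens A B) (M : Lens B C) : Lens A C where
  func := L.func ⋙ M.func
  lift _ _ u := L.lift (M.lift u).2
  lift_cod a c u := by
    show M.func.obj (L.func.obj _) = c
    rw [L.lift_cod]
    exact M.lift_cod u
  lift_map a c u := by
    show M.func.map (L.func.map _) = _
    rw [L.lift_map, Functor.map_comp, M.lift_map, eqToHom_map]
    simp
  lift_id a := by
    show L.lift (M.lift (𝟙 (M.func.obj (L.func.obj a)))).2 = _
    rw [M.lift_id]
    exact L.lift_id a
  lift_comp a c c' u v := by
    show L.lift (M.lift (u ≫ v)).2 = _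
    rw [M.lift_comp u v]
    show L.lift ((M.lift u).2 ≫ (M.lift (eqToHom (M.lift_cod u) ≫ v)).2) = _
    rw [L.lift_comp]
    have key : M.lift (eqToHom (show (L.func ⋙ M.func).obj (L.lift (M.lift u).2).1 = c by
          show M.func.obj (L.func.obj _) = c; rw [L.lift_cod]; exact M.lift_cod u) ≫ v)
        = ⟨(M.lift (eqToHom (M.lift_cod u) ≫ v)).1,
            eqToHom (L.lift_cod (M.lift u).2) ≫ (M.lift (eqToHom (M.lift_cod u) ≫ v)).2⟩ := by
      rw [show (eqToHom (show (L.func ⋙ M.func).obj (L.lift (M.lift u).2).1 = c by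
          show M.func.obj (L.func.obj _) = c; rw [L.lift_cod]; exact M.lift_cod u) ≫ v)
        = eqToHom (congrArg M.func.obj (L.lift_cod (M.lift u).2)) ≫ (eqToHom (M.lift_cod u) ≫ v) by
          rw [← Category.assoc, eqToHom_trans]]
      exact M.lift_eqToHom (L.lift_cod (M.lift u).2) _ _
    beta_reduce
    rw [key]

/-- A lens is a monomorphism in the category of small categories and lenses if it is
left-cancellable with respect to lens composition. -/
def IsMono (f : Lens A B) : Prop :=
  ∀ ⦃D : Type u⦄ [SmallCategory D], ∀ x y : Lens D A, x.comp f = y.comp f → x = y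

/-- A lens is an epimorphism in the category of small categories and lenses if it is
right-cancellable with respect to lens composition. -/
def IsEpi (f : Lens A B) : Prop :=
  ∀ ⦃C : Type u⦄ [SmallCategory C], ∀ x y : Lens B C, f.comp x = f.comp y → x = y

end Lens

namespace Lens

variable {A B : Type u} [SmallCategory A] [SmallCategory B]

theorem lift_congr {L M : Lens A B} (h : L = M) {a : A} {b : B} (u : L.func.obj a ⟶ b)
    (h' : M.func.obj a = L.func.obj a) : M.lift (eqToHom h' ≫ u) = L.lift u := by
  subst h; simp

theorem ext_of_lift {L M : Lens A B} (hfunc : L.func = M.func)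
    (hlift : ∀ (a : A) (b : B) (u : L.func.obj a ⟶ b) (h : M.func.obj a = L.func.obj a),
      M.lift (eqToHom h ≫ u) = L.lift u) : L = M := by
  obtain ⟨F, l, _, _, _, _⟩ := L
  obtain ⟨G, m, _, _, _, _⟩ := M
  dsimp only at hfunc hlift
  subst hfunc
  obtain rfl : l = m := by
    funext a b u
    simpa using (hlift a b u rfl).symm
  rfl

theorem map_of_lift_eq (L : Lens A B) {a : A} {b : B} {u : L.func.obj a ⟶ b}
    {w : Σ a' : A, a ⟶ a'} (h : L.lift u = w) :
    ∃ hw : L.func.obj w.1 = b, L.func.map w.2 = u ≫ eqToHom hw.symm := by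
  subst h; exact ⟨L.lift_cod u, L.lift_map u⟩

theorem sigma_hom_ext {a : A} {x y : Σ a' : A, a ⟶ a'} (h : x.1 = y.1)
    (h' : x.2 ≫ eqToHom h = y.2) : x = y := by
  obtain ⟨x, p⟩ := x
  obtain ⟨y, q⟩ := y
  dsimp only at h h'
  subst h
  simpa using h'

theorem obj_obj_of_idem (f : Lens A A) (hf : f.comp f = f)
    (a : A) : f.func.obj (f.func.obj a) = f.func.obj a :=
  congrArg (fun L : Lens A A => L.func.obj a) hf

/-- Both sides of `φ (a, φ (f a, u)) = φ (a, u)` have the same image under `f`, so an idempotent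
lens lifts morphisms out of its image to themselves. -/
theorem lift_of_idem (f : Lens A A) (hf : f.comp f = f)
    {a b : A} (u : f.func.obj (f.func.obj a) ⟶ b) :
    f.lift u = ⟨b, eqToHom (f.obj_obj_of_idem hf a).symm ≫ u⟩ := by
  have h : f.lift (eqToHom (f.obj_obj_of_idem hf a).symm ≫ u) = f.lift (f.lift u).2 :=
    lift_congr hf u _
  obtain ⟨hcod, hmap⟩ := f.map_of_lift_eq h
  rw [f.lift_map] at hmap
  refine sigma_hom_ext ((f.lift_cod _).symm.trans hcod) ?_
  rw [← eqToHom_trans (f.lift_cod _).symm hcod, ← Category.assoc, hmap]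
  simp

theorem lift_of_fixed (f : Lens A A) (hf : f.comp f = f)
    {a b : A} (h : f.func.obj a = a) (u : f.func.obj a ⟶ b) :
    f.lift u = ⟨b, eqToHom h.symm ≫ u⟩ := by
  have key : ∀ (x : A) (hx : x = f.func.obj a) (hx' : f.func.obj x = x) (v : f.func.obj x ⟶ b),
      f.lift v = ⟨b, eqToHom hx'.symm ≫ v⟩ := by
    intro x hx
    subst hx
    intro _ v
    exact f.lift_of_idem hf v
  exact key a h.symm h u

theorem obj_of_hom_of_fixed (f : Lens A A) (hf : f.comp f = f)
    {a b : A} (h : f.func.obj a = a) (u : a ⟶ b) :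
    f.func.obj b = b := by
  have := f.lift_cod (eqToHom h ≫ u)
  rwa [f.lift_of_fixed hf h] at this

theorem map_of_fixed (f : Lens A A) (hf : f.comp f = f)
    {a b : A} (h : f.func.obj a = a) (u : a ⟶ b) :
    f.func.map u = eqToHom h ≫ u ≫ eqToHom (f.obj_of_hom_of_fixed hf h u).symm := by
  obtain ⟨_, hmap⟩ := f.map_of_lift_eq (f.lift_of_fixed hf h (eqToHom h ≫ u))
  simpa using hmap

/-- The objects fixed by the functor of an endolens. -/
def fixed (f : Lens A A) : ObjectProperty A := fun a => f.func.obj a = a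

theorem hom_eqToHom_fullSubcategory {P : ObjectProperty A} {x y : P.FullSubcategory} (h : x = y) :
    (eqToHom h).hom = eqToHom (congrArg ObjectProperty.FullSubcategory.obj h) := by
  subst h; rfl

/-- An idempotent lens, corestricted to its fixed objects. -/
def retraction (f : Lens A A) (hf : f.comp f = f) : Lens A f.fixed.FullSubcategory where
  func := f.fixed.lift f.func (f.obj_obj_of_idem hf)
  lift _ _ u := f.lift u.hom
  lift_cod _ _ u := ObjectProperty.FullSubcategory.ext (f.lift_cod u.hom)
  lift_map _ _ u := by
    ext
    rw [ObjectProperty.FullSubcategory.comp_hom, hom_eqToHom_fullSubcategory]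
    exact f.lift_map u.hom
  lift_id a := f.lift_id a
  lift_comp _ _ _ u v := by
    simp only [ObjectProperty.FullSubcategory.comp_hom]
    rw [hom_eqToHom_fullSubcategory]
    exact f.lift_comp u.hom v.hom

/-- The inclusion of the fixed objects of an idempotent lens. -/
def inclusion (f : Lens A A) (hf : f.comp f = f) : Lens f.fixed.FullSubcategory A where
  func := f.fixed.ι
  lift a b u := ⟨⟨b, f.obj_of_hom_of_fixed hf a.property u⟩, ⟨u⟩⟩
  lift_cod _ _ _ := rfl
  lift_map _ _ u := by simp
  lift_id _ := rfl
  lift_comp _ _ _ u v := by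
    simp
    rfl

theorem retraction_comp_inclusion (f : Lens A A) (hf : f.comp f = f) :
    (f.retraction hf).comp (f.inclusion hf) = f := rfl

theorem inclusion_comp_retraction (f : Lens A A) (hf : f.comp f = f) :
    (f.inclusion hf).comp (f.retraction hf) = Lens.id f.fixed.FullSubcategory := by
  refine ext_of_lift (CategoryTheory.Functor.ext
    (fun a => ObjectProperty.FullSubcategory.ext a.property) ?_) ?_
  · intro a b u
    ext
    simp only [ObjectProperty.FullSubcategory.comp_hom, hom_eqToHom_fullSubcategory]
    exact f.map_of_fixed hf a.property u.hom
  · intro a b u h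
    refine Eq.trans ?_ (congrArg (fun w => (f.inclusion hf).lift w.2)
      (f.lift_of_fixed hf a.property u.hom)).symm
    refine Sigma.ext rfl (heq_of_eq ?_)
    ext
    change (eqToHom h ≫ u).hom = _
    rw [ObjectProperty.FullSubcategory.comp_hom, hom_eqToHom_fullSubcategory]
    rfl

end Lens

/-- In the category of small categories and lenses, all idempotents split. -/
theorem lens_idempotents_split {A : Type u} [SmallCategory A]
    (f : Lens A A) (hf : f.comp f = f) :
    ∃ (E : Cat.{u, u}) (r : Lens A E) (s : Lens E A),
      r.comp s = f ∧ s.comp r = Lens.id E :=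
  ⟨Cat.of f.fixed.FullSubcategory, f.retraction hf, f.inclusion hf,
    f.retraction_comp_inclusion hf, f.inclusion_comp_retraction hf⟩
end

section
/- If a lens (f, φ) : A ⇌ B has underlying functor f injective on objects and injective on morphisms (i.e. f is a monomorphism in the category Cat of small categories), then f is a discrete opfibration and the lens (f, φ) is a monomorphism in the category of small categories and lenses (left-cancellable with respect to lens composition). -/
open CategoryTheory

universe u

namespace CategoryTheory.Functor

variable {A B : Type u} [SmallCategory A] [SmallCategory B]

/-- Arrows out of `a` with the same image under a functor that is injective on objects and
faithful agree, codomains included. -/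
theorem sigma_hom_ext_of_map_eq (F : A ⥤ B) [F.Faithful] (hobj : Function.Injective F.obj)
    {a : A} {w w' : Σ a' : A, a ⟶ a'} (h : F.obj w.1 = F.obj w'.1)
    (hw : F.map w.2 = F.map w'.2 ≫ eqToHom h.symm) : w = w' := by
  obtain ⟨c, w⟩ := w
  obtain ⟨c', w'⟩ := w'
  obtain rfl : c = c' := hobj h
  obtain rfl : w = w' := F.map_injective (by simpa using hw)
  rfl

/-- A functor that is injective on objects and faithful is left-cancellable. -/
theorem eq_of_comp_eq_comp {D : Type u} [SmallCategory D] (F : A ⥤ B) [F.Faithful]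
    (hobj : Function.Injective F.obj) {G H : D ⥤ A} (h : G ⋙ F = H ⋙ F) : G = H :=
  Functor.ext (fun d => hobj (Functor.congr_obj h d)) fun d d' k => F.map_injective (by
    simpa [eqToHom_map] using Functor.congr_hom h k)

end CategoryTheory.Functor

namespace Lens

variable {A B : Type u} [SmallCategory A] [SmallCategory B]

/-- Lenses with the same underlying functor and the same lifts are equal. -/
theorem ext_of_func_eq {x y : Lens A B} (hfunc : x.func = y.func)
    (hlift : ∀ ⦃a : A⦄ ⦃b : B⦄ (u : x.func.obj a ⟶ b),
      x.lift u = y.lift (eqToHom (Functor.congr_obj hfunc a).symm ≫ u)) : x = y := by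
  obtain ⟨F, l, _, _, _, _⟩ := x
  obtain ⟨G, m, _, _, _, _⟩ := y
  obtain rfl : F = G := hfunc
  obtain rfl : l = m := by
    funext a b u
    simpa using hlift u
  rfl

/-- Equal lenses have equal lifts. -/
theorem lift_congr_s8 {x y : Lens A B} (h : x = y) {a : A} {b : B} (u : x.func.obj a ⟶ b) :
    x.lift u = y.lift (eqToHom (by rw [h]) ≫ u) := by
  subst h
  simp

theorem isDiscreteOpfibration_func (f : Lens A B) [f.func.Faithful]
    (hobj : Function.Injective f.func.obj) : IsDiscreteOpfibration f.func := by
  intro a b u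
  refine ⟨f.lift u, ⟨f.lift_cod u, f.lift_map u⟩, ?_⟩
  rintro w ⟨h, hw⟩
  refine f.func.sigma_hom_ext_of_map_eq hobj (h.trans (f.lift_cod u).symm) ?_
  rw [hw, f.lift_map]
  simp

/-- A lens whose underlying functor is injective on objects and faithful lifts the image of
a morphism to that morphism. -/
theorem lift_func_map (f : Lens A B) [f.func.Faithful] (hobj : Function.Injective f.func.obj)
    {a a' : A} (v : a ⟶ a') : f.lift (f.func.map v) = ⟨a', v⟩ :=
  f.func.sigma_hom_ext_of_map_eq hobj (f.lift_cod _) (f.lift_map _)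

theorem comp_lift_func_map {D : Type u} [SmallCategory D] (x : Lens D A) (f : Lens A B)
    [f.func.Faithful] (hobj : Function.Injective f.func.obj) {d : D} {a : A}
    (v : x.func.obj d ⟶ a) : (x.comp f).lift (a := d) (f.func.map v) = x.lift v := by
  change x.lift (f.lift (f.func.map v)).2 = _
  rw [f.lift_func_map hobj]

theorem isMono_of_faithful (f : Lens A B) [f.func.Faithful]
    (hobj : Function.Injective f.func.obj) : f.IsMono := by
  intro D _ x y h
  have hfunc : x.func = y.func :=
    f.func.eq_of_comp_eq_comp hobj (congrArg Lens.func h)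
  refine ext_of_func_eq hfunc fun d a v => ?_
  rw [← x.comp_lift_func_map f hobj, ← y.comp_lift_func_map f hobj, Functor.map_comp, eqToHom_map]
  exact lift_congr_s8 h (f.func.map v)

end Lens

/-- If the underlying functor of a lens is injective on objects and injective on
morphisms (i.e. a monomorphism in `Cat`), then it is a discrete opfibration and the
lens is a monomorphism in the category of small categories and lenses. -/
theorem lens_mono_of_cat_mono {A B : Type u} [SmallCategory A] [SmallCategory B]
    (f : Lens A B) (hobj : Function.Injective f.func.obj)
    (hmap : ∀ ⦃a a' : A⦄ (u v : a ⟶ a'), f.func.map u = f.func.map v → u = v) :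
    IsDiscreteOpfibration f.func ∧ f.IsMono := by
  have : f.func.Faithful := ⟨fun {_ _ u v} h => hmap u v h⟩
  exact ⟨f.isDiscreteOpfibration_func hobj, f.isMono_of_faithful hobj⟩
end

section
/- The category of small categories and lenses is balanced: a lens (f, φ) : A ⇌ B is an isomorphism (i.e. there exists a lens (g, γ) : B ⇌ A whose composites with (f, φ) in both orders are identity lenses) if and only if it is both a monomorphism (left-cancellable with respect to lens composition) and an epimorphism (right-cancellable with respect to lens composition). -/
open CategoryTheory

universe u

namespace Lens

section Basic

variable {A B C : Type u} [SmallCategory A] [SmallCategory B] [SmallCategory C]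

theorem sigma_hom_ext_s13 {x : A} {S T : Σ y : A, x ⟶ y} (h : S.1 = T.1)
    (h' : S.2 ≫ eqToHom h = T.2) : S = T := by
  obtain ⟨s, p⟩ := S
  obtain ⟨t, q⟩ := T
  obtain rfl : s = t := h
  simpa using h'

theorem ext_of_func_eq_s13 {L M : Lens A B} (h : L.func = M.func)
    (hl : ∀ (a : A) (b : B) (v : L.func.obj a ⟶ b),
      L.lift v = M.lift (eqToHom (by rw [h]) ≫ v)) : L = M := by
  obtain ⟨F, l, _, _, _, _⟩ := L
  obtain ⟨G, m, _, _, _, _⟩ := M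
  obtain rfl : F = G := h
  obtain rfl : l = m := by
    funext a b v
    simpa using hl a b v
  rfl

theorem comp_id (L : Lens A B) : L.comp (id B) = L := rfl

theorem id_comp (L : Lens A B) : (id A).comp L = L := rfl

theorem comp_assoc {D : Type u} [SmallCategory D] (L : Lens A B) (M : Lens B C) (N : Lens C D) :
    (L.comp M).comp N = L.comp (M.comp N) := rfl

theorem lift_of_eqToHom (L : Lens A B) {a : A} {b : B} (h : L.func.obj a = b) :
    L.lift (eqToHom h) = ⟨a, 𝟙 a⟩ := by
  subst h
  exact L.lift_id a

theorem lift_comp_eqToHom (L : Lens A B) {a : A} {b c : B} (v : L.func.obj a ⟶ b) (h : b = c) :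
    L.lift (v ≫ eqToHom h) = L.lift v := by
  subst h
  simp

/-- The chosen lift at `a` of the image of a morphism whose domain lies over the same object
as `a`. -/
def liftMap (L : Lens A B) {a a' b : A} (h : L.func.obj a = L.func.obj a') (v : a' ⟶ b) :
    Σ c : A, a ⟶ c :=
  L.lift (eqToHom h ≫ L.func.map v)

theorem liftMap_cod (L : Lens A B) {a a' b : A} (h : L.func.obj a = L.func.obj a') (v : a' ⟶ b) :
    L.func.obj (L.liftMap h v).1 = L.func.obj b :=
  L.lift_cod _

theorem map_liftMap (L : Lens A B) {a a' b : A} (h : L.func.obj a = L.func.obj a') (v : a' ⟶ b) :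
    L.func.map (L.liftMap h v).2 =
      eqToHom h ≫ L.func.map v ≫ eqToHom (L.liftMap_cod h v).symm := by
  rw [← Category.assoc]
  exact L.lift_map _

theorem liftMap_id (L : Lens A B) {a a' : A} (h : L.func.obj a = L.func.obj a') :
    L.liftMap h (𝟙 a') = ⟨a, 𝟙 a⟩ := by
  rw [liftMap, L.func.map_id, Category.comp_id, L.lift_of_eqToHom]

theorem liftMap_comp (L : Lens A B) {a a' b c : A} (h : L.func.obj a = L.func.obj a')
    (v : a' ⟶ b) (w : b ⟶ c) :
    L.liftMap h (v ≫ w) = ⟨(L.liftMap (L.liftMap_cod h v) w).1,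
      (L.liftMap h v).2 ≫ (L.liftMap (L.liftMap_cod h v) w).2⟩ := by
  rw [liftMap, L.func.map_comp, ← Category.assoc, L.lift_comp]
  rfl

theorem liftMap_lift (L : Lens A B) {a a' : A} (h : L.func.obj a = L.func.obj a') {b : B}
    (v : L.func.obj a' ⟶ b) : L.liftMap h (L.lift v).2 = L.lift (eqToHom h ≫ v) := by
  rw [liftMap, L.lift_map, ← Category.assoc, L.lift_comp_eqToHom]

theorem liftMap_lift_eqToHom_comp (L : Lens A B) {a a' : A} (h : L.func.obj a = L.func.obj a')
    {b : B} (v : L.func.obj a ⟶ b) :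
    L.liftMap h (L.lift (eqToHom h.symm ≫ v)).2 = L.lift v := by
  rw [liftMap_lift, eqToHom_trans_assoc, eqToHom_refl, Category.id_comp]

end Basic

section KernelPair

variable {A B : Type u} [SmallCategory A] [SmallCategory B]

/-- The objects of the kernel pair `A ×_B A` of the underlying functor of a lens. -/
structure KernelPair (f : Lens A B) : Type u where
  /-- the first component -/
  fst : A
  /-- the second component -/
  snd : A
  /-- both components lie over the same object -/
  condition : f.func.obj fst = f.func.obj snd

namespace KernelPair

variable {f : Lens A B}

/-- A morphism of the kernel pair: two morphisms lying over the same morphism. -/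
@[ext]
structure Hom (p q : KernelPair f) : Type u where
  /-- the first component -/
  fst : p.fst ⟶ q.fst
  /-- the second component -/
  snd : p.snd ⟶ q.snd
  /-- both components lie over the same morphism -/
  condition : f.func.map fst ≫ eqToHom q.condition = eqToHom p.condition ≫ f.func.map snd

theorem Hom.map_fst {p q : KernelPair f} (v : Hom p q) :
    f.func.map v.fst =
      eqToHom p.condition ≫ f.func.map v.snd ≫ eqToHom q.condition.symm := by
  rw [← Category.assoc, ← v.condition]
  simp

instance : SmallCategory (KernelPair f) where
  Hom := Hom
  id p := ⟨𝟙 _, 𝟙 _, by simp⟩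
  comp v w := ⟨v.fst ≫ w.fst, v.snd ≫ w.snd, by
    rw [Functor.map_comp, Category.assoc, w.condition, ← Category.assoc, v.condition]
    simp⟩
  id_comp _ := Hom.ext (Category.id_comp _) (Category.id_comp _)
  comp_id _ := Hom.ext (Category.comp_id _) (Category.comp_id _)
  assoc _ _ _ := Hom.ext (Category.assoc _ _ _) (Category.assoc _ _ _)

theorem sigma_ext {p : KernelPair f} {S T : Σ q : KernelPair f, p ⟶ q}
    (h₁ : (⟨S.1.fst, S.2.fst⟩ : Σ a, p.fst ⟶ a) = ⟨T.1.fst, T.2.fst⟩)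
    (h₂ : (⟨S.1.snd, S.2.snd⟩ : Σ a, p.snd ⟶ a) = ⟨T.1.snd, T.2.snd⟩) : S = T := by
  obtain ⟨⟨s₁, s₂, hs⟩, ⟨v₁, v₂, hv⟩⟩ := S
  obtain ⟨⟨t₁, t₂, ht⟩, ⟨w₁, w₂, hw⟩⟩ := T
  dsimp only at h₁ h₂
  cases h₁
  cases h₂
  rfl

/-- The first projection functor of the kernel pair. -/
def fstFunctor (f : Lens A B) : KernelPair f ⥤ A where
  obj p := p.fst
  map v := Hom.fst v

/-- The second projection functor of the kernel pair. -/
def sndFunctor (f : Lens A B) : KernelPair f ⥤ A where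
  obj p := p.snd
  map v := Hom.snd v

/-- The completion of a morphism in the first component to a morphism of the kernel pair. -/
def liftFst {p : KernelPair f} {b : A} (v : p.fst ⟶ b) : Σ q : KernelPair f, p ⟶ q :=
  ⟨⟨b, (f.liftMap p.condition.symm v).1, (f.liftMap_cod _ v).symm⟩,
    ⟨v, (f.liftMap p.condition.symm v).2, by simp [map_liftMap]⟩⟩

theorem liftFst_id (p : KernelPair f) : liftFst (𝟙 p.fst) = ⟨p, 𝟙 p⟩ :=
  sigma_ext rfl (f.liftMap_id _)

theorem liftFst_comp {p : KernelPair f} {b c : A} (v : p.fst ⟶ b) (w : b ⟶ c) :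
    liftFst (v ≫ w) = ⟨(liftFst (p := (liftFst v).1) w).1,
      (liftFst v).2 ≫ (liftFst (p := (liftFst v).1) w).2⟩ :=
  sigma_ext rfl (f.liftMap_comp _ v w)

/-- The first projection of the kernel pair, whose lifts complete a morphism by the
chosen lift of its image. -/
def fstLens (f : Lens A B) : Lens (KernelPair f) A where
  func := fstFunctor f
  lift _ _ v := liftFst v
  lift_cod _ _ _ := rfl
  lift_map _ _ _ := (Category.comp_id _).symm
  lift_id := liftFst_id
  lift_comp p b c v w :=
    (liftFst_comp v w).trans (congrArg
      (fun k : b ⟶ c => (⟨(liftFst (p := (liftFst v).1) k).1,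
        (liftFst v).2 ≫ (liftFst (p := (liftFst v).1) k).2⟩ : Σ q : KernelPair f, p ⟶ q))
      (Category.id_comp w).symm)

/-- The completion of a morphism in the second component to a morphism of the kernel pair. -/
def liftSnd {p : KernelPair f} {b : A} (v : p.snd ⟶ b) : Σ q : KernelPair f, p ⟶ q :=
  ⟨⟨(f.liftMap p.condition v).1, b, f.liftMap_cod _ v⟩,
    ⟨(f.liftMap p.condition v).2, v, by simp [map_liftMap]⟩⟩

theorem liftSnd_id (p : KernelPair f) : liftSnd (𝟙 p.snd) = ⟨p, 𝟙 p⟩ :=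
  sigma_ext (f.liftMap_id _) rfl

theorem liftSnd_comp {p : KernelPair f} {b c : A} (v : p.snd ⟶ b) (w : b ⟶ c) :
    liftSnd (v ≫ w) = ⟨(liftSnd (p := (liftSnd v).1) w).1,
      (liftSnd v).2 ≫ (liftSnd (p := (liftSnd v).1) w).2⟩ :=
  sigma_ext (f.liftMap_comp _ v w) rfl

/-- The second projection of the kernel pair, whose lifts complete a morphism by the
chosen lift of its image. -/
def sndLens (f : Lens A B) : Lens (KernelPair f) A where
  func := sndFunctor f
  lift _ _ v := liftSnd v
  lift_cod _ _ _ := rfl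
  lift_map _ _ _ := (Category.comp_id _).symm
  lift_id := liftSnd_id
  lift_comp p b c v w :=
    (liftSnd_comp v w).trans (congrArg
      (fun k : b ⟶ c => (⟨(liftSnd (p := (liftSnd v).1) k).1,
        (liftSnd v).2 ≫ (liftSnd (p := (liftSnd v).1) k).2⟩ : Σ q : KernelPair f, p ⟶ q))
      (Category.id_comp w).symm)

theorem fstLens_comp (f : Lens A B) : (fstLens f).comp f = (sndLens f).comp f := by
  refine ext_of_func_eq_s13 (CategoryTheory.Functor.ext (fun p => p.condition) fun p q v => ?_)
    fun p b v => ?_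
  · exact v.map_fst
  · refine sigma_ext ?_ ?_
    · exact (f.liftMap_lift_eqToHom_comp p.condition v).symm
    · exact f.liftMap_lift p.condition.symm v

end KernelPair

theorem IsMono.obj_injective {f : Lens A B} (hf : f.IsMono) :
    Function.Injective f.func.obj := fun a a' h =>
  Functor.congr_obj (congrArg Lens.func (hf _ _ (KernelPair.fstLens_comp f)))
    (⟨a, a', h⟩ : KernelPair f)

theorem IsMono.faithful {f : Lens A B} (hf : f.IsMono) : f.func.Faithful where
  map_injective {a a'} v w h := by
    let k : (⟨a, a, rfl⟩ : KernelPair f) ⟶ ⟨a', a', rfl⟩ := ⟨v, w, by simpa using h⟩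
    have hk : v = eqToHom rfl ≫ w ≫ eqToHom rfl :=
      Functor.congr_hom (congrArg Lens.func (hf _ _ (KernelPair.fstLens_comp f))) k
    simpa using hk

end KernelPair

theorem full_of_obj_injective {A B : Type u} [SmallCategory A] [SmallCategory B] (f : Lens A B)
    (hf : Function.Injective f.func.obj) : f.func.Full where
  map_surjective v :=
    ⟨(f.lift v).2 ≫ eqToHom (hf (f.lift_cod v)), by simp [f.lift_map, eqToHom_map]⟩

section Doubling

variable {B : Type u} [SmallCategory B]

/-- The objects of the category obtained by gluing two copies of `B` along the cosieve `P`: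
objects of `B`, labelled by one of the two copies when outside `P`. -/
structure Doubling {P : B → Prop} (hP : ∀ ⦃b c : B⦄, (b ⟶ c) → P b → P c) : Type u where
  /-- the underlying object -/
  obj : B
  /-- the copy to which an object outside `P` belongs -/
  label : ¬ P obj → Bool

namespace Doubling

variable {P : B → Prop} {hP : ∀ ⦃b c : B⦄, (b ⟶ c) → P b → P c}

/-- A morphism of the doubling: a morphism of `B` that does not change the copy. -/
@[ext]
structure Hom (x y : Doubling hP) : Type u where
  /-- the underlying morphism -/
  hom : x.obj ⟶ y.obj
  /-- the labels agree outside `P` -/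
  label_eq : ∀ (hx : ¬ P x.obj) (hy : ¬ P y.obj), y.label hy = x.label hx

instance : Category.{u} (Doubling hP) where
  Hom := Hom
  id _ := ⟨𝟙 _, fun _ _ => rfl⟩
  comp v w := ⟨v.hom ≫ w.hom, fun hx hz =>
    (w.label_eq (fun h => hz (hP w.hom h)) hz).trans (v.label_eq hx _)⟩
  id_comp _ := Hom.ext (Category.id_comp _)
  comp_id _ := Hom.ext (Category.comp_id _)
  assoc _ _ _ := Hom.ext (Category.assoc _ _ _)

theorem eqToHom_comp_hom {b : B} {s t : ¬ P b → Bool} (h : (⟨b, s⟩ : Doubling hP) = ⟨b, t⟩)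
    {z : Doubling hP} (w : (⟨b, t⟩ : Doubling hP) ⟶ z) : (eqToHom h ≫ w).hom = w.hom := by
  cases h
  rw [eqToHom_refl, Category.id_comp]

theorem comp_eqToHom_hom {b : B} {s t : ¬ P b → Bool} (h : (⟨b, s⟩ : Doubling hP) = ⟨b, t⟩)
    {z : Doubling hP} (w : z ⟶ (⟨b, s⟩ : Doubling hP)) : (w ≫ eqToHom h).hom = w.hom := by
  cases h
  rw [eqToHom_refl, Category.comp_id]

theorem mk_obj_eq {t : Bool} {b : B} {c : Doubling hP}
    (v : (⟨b, fun _ => t⟩ : Doubling hP) ⟶ c) : ⟨c.obj, fun _ => t⟩ = c :=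
  congrArg (mk c.obj) (funext fun hc => (v.label_eq (fun h => hc (hP v.hom h)) hc).symm)

variable (hP)

/-- The inclusion functor of one of the two copies of `B` into the doubling. -/
def inclusionFunctor (t : Bool) : B ⥤ Doubling hP where
  obj b := ⟨b, fun _ => t⟩
  map v := ⟨v, fun _ _ => rfl⟩

/-- The inclusion of one of the two copies of `B` into the doubling. -/
def inclusion (t : Bool) : Lens B (Doubling hP) where
  func := inclusionFunctor hP t
  lift _ c v := ⟨c.obj, v.hom⟩
  lift_cod _ _ v := mk_obj_eq v
  lift_map _ _ v := Hom.ext (comp_eqToHom_hom (mk_obj_eq v).symm v).symm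
  lift_id _ := rfl
  lift_comp b c d v w :=
    congrArg (fun k : c.obj ⟶ d.obj => (⟨d.obj, v.hom ≫ k⟩ : Σ e : B, b ⟶ e))
      (eqToHom_comp_hom (mk_obj_eq v) w).symm

end Doubling

end Doubling

section Iso

variable {A B : Type u} [SmallCategory A] [SmallCategory B]

theorem IsEpi.obj_surjective {f : Lens A B} (hf : f.IsEpi) :
    Function.Surjective f.func.obj := by
  have hP : ∀ ⦃b c : B⦄, (b ⟶ c) → (∃ a, f.func.obj a = b) → ∃ a, f.func.obj a = c := by
    rintro _ c v ⟨a, rfl⟩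
    exact ⟨_, f.lift_cod v⟩
  have hobj (a : A) : (⟨f.func.obj a, fun _ => true⟩ : Doubling hP) =
      ⟨f.func.obj a, fun _ => false⟩ :=
    congrArg (Doubling.mk _) (funext fun h => (h ⟨a, rfl⟩).elim)
  have hcomp : f.comp (Doubling.inclusion hP true) = f.comp (Doubling.inclusion hP false) := by
    refine ext_of_func_eq_s13 (CategoryTheory.Functor.ext hobj fun a a' v => ?_) fun a c v => ?_
    · exact Doubling.Hom.ext
        ((Doubling.eqToHom_comp_hom (hobj a) _).trans
          (Doubling.comp_eqToHom_hom (hobj a').symm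
            ((Doubling.inclusionFunctor hP false).map (f.func.map v)))).symm
    · exact congrArg (fun w : f.func.obj a ⟶ c.obj => f.lift w)
        (Doubling.eqToHom_comp_hom (hobj a).symm v).symm
  have hincl := congrArg Lens.func (hf _ _ hcomp)
  intro b
  by_contra hb
  have hlabel : ∀ x y : Doubling hP, x = y → ∀ hx hy, x.label hx = y.label hy := by
    rintro x _ rfl _ _
    rfl
  exact Bool.noConfusion (hlabel _ _ (Functor.congr_obj hincl b) hb hb)

theorem exists_comp_eq_id (f : Lens A B) [f.func.Full] [f.func.Faithful]
    (hf : Function.Bijective f.func.obj) : ∃ g : Lens B A, g.comp f = id B := by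
  obtain ⟨s, hsf, hfs⟩ := Function.bijective_iff_has_inverse.mp hf
  let G : B ⥤ A :=
    { obj := s
      map := fun {b c} v => f.func.preimage (eqToHom (hfs b) ≫ v ≫ eqToHom (hfs c).symm)
      map_id := fun b => f.func.map_injective (by simp)
      map_comp := fun v w => f.func.map_injective (by simp) }
  have hG : ∀ {b c : B} (v : b ⟶ c),
      f.func.map (G.map v) = eqToHom (hfs b) ≫ v ≫ eqToHom (hfs c).symm :=
    fun v => f.func.map_preimage _
  let g : Lens B A :=
    { func := G
      lift := fun b a w => ⟨f.func.obj a, eqToHom (hfs b).symm ≫ f.func.map w⟩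
      lift_cod := fun _ a _ => hsf a
      lift_map := fun b a w => f.func.map_injective (by simp [hG, eqToHom_map])
      lift_id := fun b => sigma_hom_ext_s13 (hfs b) (by
        rw [show f.func.map (𝟙 (G.obj b)) = 𝟙 (f.func.obj (s b)) from f.func.map_id _]
        simp)
      lift_comp := fun b a c v w => by simp [eqToHom_map] }
  refine ⟨g, ext_of_func_eq_s13 (CategoryTheory.Functor.ext hfs fun b c v => hG v) fun b c v => ?_⟩
  have hv (w : f.func.obj (s b) ⟶ c) :
      (eqToHom (hfs b).symm ≫ f.func.map (f.lift w).2) ≫ eqToHom (f.lift_cod w) =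
        eqToHom (hfs b).symm ≫ w := by
    simp [f.lift_map]
  exact sigma_hom_ext_s13 (f.lift_cod v) (hv v)

theorem isMono_of_comp_eq_id {f : Lens A B} {g : Lens B A} (h : f.comp g = id A) : f.IsMono := by
  intro D _ x y hxy
  rw [← x.comp_id, ← y.comp_id, ← h, ← comp_assoc, ← comp_assoc, hxy]

theorem isEpi_of_comp_eq_id {f : Lens A B} {g : Lens B A} (h : g.comp f = id B) : f.IsEpi := by
  intro C _ x y hxy
  rw [← x.id_comp, ← y.id_comp, ← h, comp_assoc, comp_assoc, hxy]

end Iso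

end Lens

/-- The category of small categories and lenses is balanced: a lens is an isomorphism if
and only if it is both a monomorphism and an epimorphism. -/
theorem lens_balanced {A B : Type u} [SmallCategory A] [SmallCategory B] (f : Lens A B) :
    (∃ g : Lens B A, f.comp g = Lens.id A ∧ g.comp f = Lens.id B) ↔
      (f.IsMono ∧ f.IsEpi) := by
  constructor
  · rintro ⟨g, hfg, hgf⟩
    exact ⟨Lens.isMono_of_comp_eq_id hfg, Lens.isEpi_of_comp_eq_id hgf⟩
  · rintro ⟨hm, he⟩
    have := hm.faithful
    have := f.full_of_obj_injective hm.obj_injective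
    obtain ⟨g, hg⟩ := f.exists_comp_eq_id ⟨hm.obj_injective, he.obj_surjective⟩
    refine ⟨g, hm _ _ ?_, hg⟩
    rw [Lens.comp_assoc, hg, Lens.comp_id, Lens.id_comp]
end
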